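/- Let H be a real Hilbert space, (Ω, 𝔽, ℙ) a probability space, and I : H → L²(Ω, ℙ) a linear map such that for every h ∈ H the random variable I(h) has the Gaussian law N(0, ‖h‖²). Let k_p, k₁, …, kₙ ∈ H and let e₁, …, eₙ ∈ H be an orthonormal family orthogonal to k_p and to each kᵢ. Let λ > 0, set Yⱼ = I(kⱼ) + √λ · I(eⱼ) for 1 ≤ j ≤ n, and let K_D be the n×n matrix with [K_D]ᵢⱼ = ⟨kᵢ, kⱼ⟩ and w ∈ ℝⁿ the vector with wⱼ = ⟨kⱼ, k_p⟩. Then, with a = (K_D + λ Iₙ)⁻¹ w, one has E[I(k_p) | σ(Y₁, …, Yₙ)] = Σⱼ₌₁ⁿ aⱼ Yⱼ almost surely. In particular, writing f̂_λ(y) = Σⱼ ((K_D + λ Iₙ)⁻¹ y)ⱼ ⟨kⱼ, k_p⟩ for y ∈ ℝⁿ (the ridge regression prediction), the random variable f̂_λ(Y₁, …, Yₙ) is a version of E[I(k_p) | σ(Y₁, …, Yₙ)]. -/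

import Mathlib

open MeasureTheory ProbabilityTheory
open scoped RealInnerProductSpace Matrix

section Helpers

variable {H Ω : Type*} [NormedAddCommGroup H] [InnerProductSpace ℝ H]
    [MeasurableSpace Ω] {P : Measure Ω} [IsProbabilityMeasure P]
    {I : H →ₗ[ℝ] Lp ℝ 2 P}

lemma ridge_var (hGauss : ∀ h : H, Measure.map (⇑(I h)) P = gaussianReal 0 (‖h‖₊ ^ 2)) (u : H) :
    Var[⇑(I u); P] = ‖u‖ ^ 2 := by
  rw [← variance_id_map (Lp.stronglyMeasurable (I u)).measurable.aemeasurable, hGauss,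
    variance_id_gaussianReal]
  simp

lemma ridge_mean (hGauss : ∀ h : H, Measure.map (⇑(I h)) P = gaussianReal 0 (‖h‖₊ ^ 2)) (u : H) :
    P[⇑(I u)] = 0 := by
  have h := integral_id_gaussianReal (μ := 0) (v := ‖u‖₊ ^ 2)
  rw [← hGauss u, integral_map (Lp.stronglyMeasurable (I u)).measurable.aemeasurable
    (by fun_prop)] at h
  exact h

lemma ridge_cov (hGauss : ∀ h : H, Measure.map (⇑(I h)) P = gaussianReal 0 (‖h‖₊ ^ 2)) (u v : H) :
    cov[⇑(I u), ⇑(I v); P] = ⟪u, v⟫ := by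
  have h := ridge_var hGauss (u + v)
  have h2 : ⇑(I (u + v)) =ᵐ[P] ⇑(I u) + ⇑(I v) := by
    rw [map_add]; exact Lp.coeFn_add _ _
  rw [variance_congr h2, variance_add (Lp.memLp _) (Lp.memLp _), ridge_var hGauss,
    ridge_var hGauss, norm_add_sq_real] at h
  linarith

lemma ridge_sum {ι : Type*} (s : Finset ι) (c : ι → ℝ) (g : ι → H) :
    ⇑(I (∑ j ∈ s, c j • g j)) =ᵐ[P] fun ω => ∑ j ∈ s, c j * I (g j) ω := by
  classical
  induction s using Finset.induction_on with
  | empty => simpa using (show _ =ᵐ[P] (fun _ => (0:ℝ)) from Lp.coeFn_zero ℝ 2 P)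
  | insert i s hi ih =>
    rw [Finset.sum_insert hi, map_add, map_smul]
    filter_upwards [ih, Lp.coeFn_add (c i • I (g i)) (I (∑ j ∈ s, c j • g j)),
      Lp.coeFn_smul (c i) (I (g i))] with ω h1 h2 h3
    rw [h2, Finset.sum_insert hi, Pi.add_apply, h1, h3]
    simp

lemma ridge_gaussian (hGauss : ∀ h : H, Measure.map (⇑(I h)) P = gaussianReal 0 (‖h‖₊ ^ 2))
    (n : ℕ) (z : H) (g : Fin n → H) :
    HasGaussianLaw (fun ω => ((fun _ : Unit => I z ω), fun j => I (g j) ω)) P where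
  isGaussian_map := by
    have hm : ∀ u, Measurable ⇑(I u) := fun u => (Lp.stronglyMeasurable (I u)).measurable
    refine isGaussian_of_map_eq_gaussianReal fun L => ?_
    rw [Measure.map_map (by fun_prop) (by fun_prop)]
    set c : Fin n → ℝ := fun j => L (0, Pi.single j 1)
    set d : ℝ := L (fun _ => 1, 0)
    refine ⟨0, ‖d • z + ∑ j, c j • g j‖₊ ^ 2, ?_⟩
    rw [← hGauss]
    refine Measure.map_congr ?_
    rw [map_add, map_smul]
    filter_upwards [ridge_sum (I := I) Finset.univ c g,
      Lp.coeFn_add (d • I z) (I (∑ j, c j • g j)), Lp.coeFn_smul d (I z)] with ω h1 h2 h3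
    rw [h2, Pi.add_apply, h1, h3]
    have key : (((fun _ : Unit => I z ω), fun j => I (g j) ω) : (Unit → ℝ) × (Fin n → ℝ))
        = (I z ω) • ((fun _ => 1, 0) : (Unit → ℝ) × (Fin n → ℝ))
          + ∑ j, (I (g j) ω) • ((0, Pi.single j 1) : (Unit → ℝ) × (Fin n → ℝ)) := by
      ext x
      · simp [Prod.fst_sum]
      · simp [Prod.snd_sum, Finset.sum_apply, Pi.single_apply]
    simp only [Function.comp_apply]
    rw [key, map_add, map_smul, map_sum]
    simp only [map_smul, smul_eq_mul, Pi.smul_apply, c, d]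
    simp only [mul_comm]

end Helpers

lemma ridge_condExp {Ω : Type*} {m m0 : MeasurableSpace Ω} {P : Measure[m0] Ω}
    [IsProbabilityMeasure P] (hmle : m ≤ m0) {X Z S : Ω → ℝ} (hZm : Measurable[m0] Z)
    (hZi : Integrable Z P) (hZ0 : P[Z] = 0)
    (hind : Indep (MeasurableSpace.comap Z inferInstance) m P)
    (hSm : StronglyMeasurable[m] S) (hSi : Integrable S P) (hdecomp : X =ᵐ[P] Z + S) :
    P[X | m] =ᵐ[P] S := by
  have hz0 := condExp_indep_eq (μ := P) (m₁ := MeasurableSpace.comap Z inferInstance)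
    (m₂ := m) (f := Z) hZm.comap_le hmle (comap_measurable _).stronglyMeasurable hind
  rw [hZ0] at hz0
  refine (condExp_congr_ae hdecomp).trans ?_
  refine (condExp_add hZi hSi m).trans ?_
  rw [condExp_of_stronglyMeasurable hmle hSm hSi]
  filter_upwards [hz0] with ω h
  simp [h]

/-- Ridge regression as a conditional expectation with respect to the Gaussian
process `I` (the Paley–Wiener style isometry of an abstract Wiener space):
given noisy observations `Yⱼ = I(kⱼ) + √λ I(eⱼ)` with `(eⱼ)` orthonormal and
orthogonal to `k_p` and all `kᵢ`, the conditional expectation of `I(k_p)` given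
`σ(Y₁, …, Yₙ)` is `∑ⱼ aⱼ Yⱼ` with `a = (K_D + λ Iₙ)⁻¹ w`, `wⱼ = ⟪kⱼ, k_p⟫`;
equivalently, it is the ridge-regression prediction
`f̂_λ(y) = ∑ⱼ ((K_D + λ Iₙ)⁻¹ y)ⱼ ⟪kⱼ, k_p⟫` evaluated at `y = (Y₁, …, Yₙ)`. -/
theorem ridge_regression_as_conditional_expectation
    {H Ω : Type*} [NormedAddCommGroup H] [InnerProductSpace ℝ H] [CompleteSpace H]
    [MeasurableSpace Ω] (P : Measure Ω) [IsProbabilityMeasure P]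
    (I : H →ₗ[ℝ] Lp ℝ 2 P)
    (hGauss : ∀ h : H, Measure.map (⇑(I h)) P = gaussianReal 0 (‖h‖₊ ^ 2))
    (n : ℕ) (kp : H) (k : Fin n → H) (e : Fin n → H)
    (he : Orthonormal ℝ e)
    (hek : ∀ i j, ⟪e i, k j⟫ = 0) (hep : ∀ i, ⟪e i, kp⟫ = 0)
    (lam : ℝ) (hlam : 0 < lam)
    (Y : Fin n → Ω → ℝ)
    (hY : ∀ j, Y j = fun ω => (I (k j)) ω + Real.sqrt lam * (I (e j)) ω)
    (KD : Matrix (Fin n) (Fin n) ℝ) (hKD : ∀ i j, KD i j = ⟪k i, k j⟫)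
    (w : Fin n → ℝ) (hw : ∀ j, w j = ⟪k j, kp⟫)
    (a : Fin n → ℝ)
    (ha : a = (KD + lam • (1 : Matrix (Fin n) (Fin n) ℝ))⁻¹ *ᵥ w) :
    (P[⇑(I kp) | ⨆ j, MeasurableSpace.comap (Y j) inferInstance] =ᵐ[P]
        fun ω => ∑ j, a j * Y j ω) ∧
      (P[⇑(I kp) | ⨆ j, MeasurableSpace.comap (Y j) inferInstance] =ᵐ[P]
        fun ω => ∑ j,
          ((KD + lam • (1 : Matrix (Fin n) (Fin n) ℝ))⁻¹ *ᵥ (fun i => Y i ω)) j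
            * w j) := by
  classical
  set M := KD + lam • (1 : Matrix (Fin n) (Fin n) ℝ) with hM
  have hKg : KD = Matrix.gram ℝ k := by ext i j; simp [hKD, Matrix.gram]
  have hMpos : M.PosDef := by
    rw [hM, hKg]
    exact Matrix.PosDef.posSemidef_add (Matrix.posSemidef_gram ℝ k) (Matrix.PosDef.one.smul hlam)
  have hMa : M *ᵥ a = w := by
    rw [ha, Matrix.mulVec_mulVec, Matrix.mul_nonsing_inv _ hMpos.det_pos.ne'.isUnit,
      Matrix.one_mulVec]
  have hMsymm : (M⁻¹)ᵀ = M⁻¹ := by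
    have := hMpos.inv.isHermitian
    rwa [Matrix.IsHermitian, Matrix.conjTranspose_eq_transpose_of_trivial] at this
  have hm : ∀ u, Measurable ⇑(I u) := fun u => (Lp.stronglyMeasurable (I u)).measurable
  have hYm : ∀ j, Measurable (Y j) := by
    intro j; rw [hY]; have := hm (k j); have := hm (e j); fun_prop
  set g : Fin n → H := fun j => k j + Real.sqrt lam • e j with hg
  have hYg : ∀ j, ⇑(I (g j)) =ᵐ[P] Y j := by
    intro j
    rw [hY, hg]
    simp only [map_add, map_smul]
    filter_upwards [Lp.coeFn_add (I (k j)) (Real.sqrt lam • I (e j)),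
      Lp.coeFn_smul (Real.sqrt lam) (I (e j))] with ω h1 h2
    rw [h1, Pi.add_apply, h2]; simp
  have hgg : ∀ i j, ⟪g i, g j⟫ = M i j := by
    intro i j
    have h1 : ⟪k i, e j⟫ = 0 := by rw [real_inner_comm]; exact hek j i
    have h2 : ⟪e i, e j⟫ = if i = j then 1 else 0 := orthonormal_iff_ite.1 he i j
    simp only [hg, inner_add_left, inner_add_right, real_inner_smul_left, real_inner_smul_right,
      hek, h1, h2, hM, Matrix.add_apply, Matrix.smul_apply, Matrix.one_apply, hKD, smul_eq_mul]
    have := Real.mul_self_sqrt hlam.le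
    rw [← mul_assoc, this]; ring
  have hgp : ∀ i, ⟪g i, kp⟫ = w i := by
    intro i
    simp [hg, inner_add_left, real_inner_smul_left, hep, hw]
  set z : H := kp - ∑ j, a j • g j with hz
  have hzg : ∀ j, ⟪z, g j⟫ = 0 := by
    intro j
    rw [real_inner_comm, hz, inner_sub_right, hgp, inner_sum]
    simp only [real_inner_smul_right, hgg]
    have := congrFun hMa j
    simp only [Matrix.mulVec, dotProduct] at this
    rw [← this, sub_eq_zero]
    exact Finset.sum_congr rfl fun _ _ => mul_comm _ _
  have hind : IndepFun (fun ω (_ : Unit) => I z ω) (fun ω j => I (g j) ω) P :=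
    (ridge_gaussian hGauss n z g).indepFun_of_covariance_eval
      (X := fun _ : Unit => ⇑(I z)) (Y := fun j => ⇑(I (g j)))
      fun _ j => by rw [ridge_cov hGauss, hzg]
  have hind2 : IndepFun (⇑(I z)) (fun ω j => Y j ω) P := by
    have h1 : IndepFun (⇑(I z)) (fun ω j => I (g j) ω) P :=
      hind.comp (φ := fun f : Unit → ℝ => f ()) (ψ := id) (by fun_prop) measurable_id
    refine h1.congr (Filter.EventuallyEq.refl _ _) ?_
    filter_upwards [ae_all_iff.2 hYg] with ω h
    funext j; exact h j
  have hcomap : (⨆ j, MeasurableSpace.comap (Y j) inferInstance)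
      = MeasurableSpace.comap (fun ω j => Y j ω) MeasurableSpace.pi := by
    simp_rw [MeasurableSpace.pi, MeasurableSpace.comap_iSup, MeasurableSpace.comap_comp]
    rfl
  have hmle : (⨆ j, MeasurableSpace.comap (Y j) inferInstance) ≤ ‹MeasurableSpace Ω› :=
    iSup_le fun j => (hYm j).comap_le
  set S : Ω → ℝ := fun ω => ∑ j, a j * Y j ω with hS
  have hSm : StronglyMeasurable[⨆ j, MeasurableSpace.comap (Y j) inferInstance] S := by
    refine Finset.stronglyMeasurable_fun_sum _ fun j _ => ?_
    have : Measurable[⨆ j, MeasurableSpace.comap (Y j) inferInstance] (Y j) :=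
      (comap_measurable (Y j)).mono (le_iSup (fun j => MeasurableSpace.comap (Y j) _) j) le_rfl
    exact this.stronglyMeasurable.const_mul _
  have hYi : ∀ j, Integrable (Y j) P := fun j =>
    ((Lp.memLp (I (g j))).integrable (by norm_num)).congr (hYg j)
  have hSi : Integrable S P := integrable_finsetSum _ fun j _ => (hYi j).const_mul _
  have hdecomp : ⇑(I kp) =ᵐ[P] ⇑(I z) + S := by
    have : kp = z + ∑ j, a j • g j := by simp [hz]
    have h0 : I kp = I z + I (∑ j, a j • g j) := by rw [← map_add, ← this]
    rw [h0]
    filter_upwards [Lp.coeFn_add (I z) (I (∑ j, a j • g j)),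
      ridge_sum (I := I) Finset.univ a g, ae_all_iff.2 hYg] with ω h1 h2 h3
    rw [h1, Pi.add_apply, h2, Pi.add_apply, hS]
    simp [h3]
  have main : P[⇑(I kp) | ⨆ j, MeasurableSpace.comap (Y j) inferInstance] =ᵐ[P] S :=
    ridge_condExp hmle (hm z) ((Lp.memLp (I z)).integrable (by norm_num)) (ridge_mean hGauss z)
      (by rw [hcomap]; exact hind2) hSm hSi hdecomp
  refine ⟨main, main.trans (Filter.Eventually.of_forall fun ω => ?_)⟩
  have : a ⬝ᵥ (fun i => Y i ω) = (M⁻¹ *ᵥ (fun i => Y i ω)) ⬝ᵥ w := by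
    rw [ha, dotProduct_comm _ w, Matrix.dotProduct_mulVec, ← Matrix.mulVec_transpose, hMsymm]
  exact this
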